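/- Fix t > 0 with t ≠ 2 and x ∈ ℝ, and let F_n(x) = Φ(g_n)^{n} − (1 − Φ(g_n))^{n} where g_n = (c_n x + d_n)^{1/t}, defined for n large enough that c_n x + d_n > 0; F_n(x) equals the probability P(|M_n|^t ≤ c_n x + d_n) for the maximum M_n of n independent standard normal random variables. Then as n → ∞, F_n(x) = Λ(x) + b_n^{−2} Λ(x) e^{−x} ( k₁ + b_n^{−2} k₂ + O(b_n^{−4}) ), where k₁ = 1 + x + ((2−t)/2) x² and k₂ = −( 3 + 3x + (3/2) x² + ((2−t)(2t+1)/6) x³ + ((t−2)²/8) x⁴ − (e^{−x}/2)(1 + x + ((2−t)/2) x²)² ); that is, there exist C > 0 and N such that for all n ≥ N, |F_n(x) − Λ(x) − b_n^{−2} Λ(x) e^{−x} k₁ − b_n^{−4} Λ(x) e^{−x} k₂| ≤ C b_n^{−6}. -/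

import Mathlib

open Real Filter Topology

/-- The standard normal distribution function. -/
noncomputable def stdNormalCDF (x : ℝ) : ℝ :=
  ∫ u in Set.Iic x, Real.exp (-u ^ 2 / 2) / Real.sqrt (2 * Real.pi)

/-- The Gumbel distribution function `Λ(x) = exp(−e^{−x})`. -/
noncomputable def gumbel (x : ℝ) : ℝ := Real.exp (-Real.exp (-x))

open Asymptotics

/-- Second order expansion in a small parameter `h`. -/
def HasExp2 (h f : ℕ → ℝ) (a0 a1 a2 : ℝ) : Prop :=
  (fun n => f n - (a0 + a1 * h n + a2 * h n ^ 2)) =O[atTop] fun n => h n ^ 3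

lemma HasExp2.congr_coeff {h f : ℕ → ℝ} {a0 a1 a2 b0 b1 b2 : ℝ} (H : HasExp2 h f a0 a1 a2)
    (e0 : a0 = b0) (e1 : a1 = b1) (e2 : a2 = b2) : HasExp2 h f b0 b1 b2 := by
  subst e0 e1 e2; exact H

lemma HasExp2.congr_fun' {h f f' : ℕ → ℝ} {a0 a1 a2 : ℝ} (H : HasExp2 h f a0 a1 a2)
    (e : f =ᶠ[atTop] f') : HasExp2 h f' a0 a1 a2 := by
  unfold HasExp2 at *
  refine H.congr' ?_ EventuallyEq.rfl
  filter_upwards [e] with n hn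
  rw [hn]

lemma HasExp2.add_err {h f f' : ℕ → ℝ} {a0 a1 a2 : ℝ} (H : HasExp2 h f a0 a1 a2)
    (e : (fun n => f' n - f n) =O[atTop] fun n => h n ^ 3) : HasExp2 h f' a0 a1 a2 := by
  unfold HasExp2 at *
  refine (H.add e).congr_left ?_
  intro n; ring

lemma pow_isBigO_one {h : ℕ → ℝ} (hh : Tendsto h atTop (𝓝 0)) (k : ℕ) :
    (fun n => h n ^ k) =O[atTop] fun _ => (1 : ℝ) :=
  (hh.pow k).isBigO_one ℝ

lemma poly_isBigO_one {h : ℕ → ℝ} (hh : Tendsto h atTop (𝓝 0)) (a0 a1 a2 : ℝ) :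
    (fun n => a0 + a1 * h n + a2 * h n ^ 2) =O[atTop] fun _ => (1 : ℝ) := by
  have : Tendsto (fun n => a0 + a1 * h n + a2 * h n ^ 2) atTop (𝓝 (a0 + a1 * 0 + a2 * 0 ^ 2)) :=
    (tendsto_const_nhds.add (hh.const_mul a1)).add ((hh.pow 2).const_mul a2)
  exact this.isBigO_one ℝ

lemma HasExp2.tendsto {h f : ℕ → ℝ} {a0 a1 a2 : ℝ} (hh : Tendsto h atTop (𝓝 0))
    (H : HasExp2 h f a0 a1 a2) : Tendsto f atTop (𝓝 a0) := by
  have h1 : Tendsto (fun n => a0 + a1 * h n + a2 * h n ^ 2) atTop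
      (𝓝 (a0 + a1 * 0 + a2 * 0 ^ 2)) :=
    (tendsto_const_nhds.add (hh.const_mul a1)).add ((hh.pow 2).const_mul a2)
  have h2 : Tendsto (fun n => h n ^ 3) atTop (𝓝 0) := by simpa using hh.pow 3
  have h3 := H.trans_tendsto h2
  have := h3.add h1
  simpa using this

lemma HasExp2.add {h f g : ℕ → ℝ} {a0 a1 a2 b0 b1 b2 : ℝ}
    (H : HasExp2 h f a0 a1 a2) (K : HasExp2 h g b0 b1 b2) :
    HasExp2 h (fun n => f n + g n) (a0 + b0) (a1 + b1) (a2 + b2) := by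
  unfold HasExp2 at *
  refine (IsBigO.add H K).congr_left ?_
  intro n; ring

lemma HasExp2.const_mul {h f : ℕ → ℝ} {a0 a1 a2 : ℝ}
    (H : HasExp2 h f a0 a1 a2) (c : ℝ) :
    HasExp2 h (fun n => c * f n) (c * a0) (c * a1) (c * a2) := by
  unfold HasExp2 at *
  refine (IsBigO.const_mul_left H c).congr_left ?_
  intro n; ring

lemma HasExp2.const (h : ℕ → ℝ) (c : ℝ) : HasExp2 h (fun _ => c) c 0 0 := by
  unfold HasExp2
  refine (isBigO_zero _ _).congr_left ?_
  intro n; ring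

lemma HasExp2.mul {h f g : ℕ → ℝ} {a0 a1 a2 b0 b1 b2 : ℝ} (hh : Tendsto h atTop (𝓝 0))
    (H : HasExp2 h f a0 a1 a2) (K : HasExp2 h g b0 b1 b2) :
    HasExp2 h (fun n => f n * g n) (a0 * b0) (a0 * b1 + a1 * b0)
      (a0 * b2 + a1 * b1 + a2 * b0) := by
  have hg := (K.tendsto hh).isBigO_one ℝ
  have hA := poly_isBigO_one hh a0 a1 a2
  have h1 : (fun n => (f n - (a0 + a1 * h n + a2 * h n ^ 2)) * g n) =O[atTop]
      fun n => h n ^ 3 := by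
    simpa using IsBigO.mul H hg
  have h2 : (fun n => (a0 + a1 * h n + a2 * h n ^ 2) * (g n - (b0 + b1 * h n + b2 * h n ^ 2)))
      =O[atTop] fun n => h n ^ 3 := by
    simpa using IsBigO.mul hA K
  have h3 : (fun n => h n ^ 3 * ((a1 * b2 + a2 * b1) + (a2 * b2) * h n + 0 * h n ^ 2))
      =O[atTop] fun n => h n ^ 3 := by
    simpa using IsBigO.mul (isBigO_refl (fun n => h n ^ 3) atTop)
      (poly_isBigO_one hh (a1 * b2 + a2 * b1) (a2 * b2) 0)
  unfold HasExp2
  refine ((h1.add h2).add h3).congr_left ?_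
  intro n; ring

lemma HasExp2.shift {h f : ℕ → ℝ} {a0 a1 a2 : ℝ} (hh : Tendsto h atTop (𝓝 0))
    (H : HasExp2 h f a0 a1 a2) : HasExp2 h (fun n => h n * f n) 0 a0 a1 := by
  have hid : HasExp2 h h 0 1 0 := by
    unfold HasExp2
    refine (isBigO_zero _ _).congr_left ?_
    intro n; ring
  refine (hid.mul hh H).congr_coeff ?_ ?_ ?_ <;> ring

lemma HasExp2.exp {h f : ℕ → ℝ} {a0 a1 a2 : ℝ} (hh : Tendsto h atTop (𝓝 0))
    (H : HasExp2 h f a0 a1 a2) :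
    HasExp2 h (fun n => Real.exp (f n)) (Real.exp a0) (Real.exp a0 * a1)
      (Real.exp a0 * (a2 + a1 ^ 2 / 2)) := by
  -- r = f - a0
  have hr : HasExp2 h (fun n => f n + -a0) 0 a1 a2 :=
    (H.add (HasExp2.const h (-a0))).congr_coeff (by ring) (by ring) (by ring)
  have hr0 := hr.tendsto hh
  have hrO : (fun n => f n + -a0) =O[atTop] h := by
    have e1 : (fun n => h n ^ 3) =O[atTop] h := by
      have := (isBigO_refl h atTop).mul (pow_isBigO_one hh 2)
      refine (this.congr_left ?_).congr_right ?_
      · intro n; ring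
      · intro n; ring
    have e2 : (fun n => h n * (a1 + a2 * h n + 0 * h n ^ 2)) =O[atTop] h := by
      simpa using (isBigO_refl h atTop).mul (poly_isBigO_one hh a1 a2 0)
    refine ((IsBigO.trans hr e1).add e2).congr_left ?_
    intro n; ring
  have hE := (Real.exp_sub_sum_range_isBigO_pow 3).comp_tendsto hr0
  have hE2 : (fun n => Real.exp (f n + -a0) - (1 + (f n + -a0) + (f n + -a0) ^ 2 / 2))
      =O[atTop] fun n => h n ^ 3 := by
    refine (hE.trans (hrO.pow 3)).congr_left ?_
    intro n
    simp [Finset.sum_range_succ]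
  have hsq := (hr.mul hh hr).const_mul (1/2)
  have hsum := ((HasExp2.const h 1).add hr).add hsq
  have h4 := (hsum.add_err (f' := fun n => Real.exp (f n + -a0)) (by
    refine hE2.congr_left ?_
    intro n; ring)).const_mul (Real.exp a0)
  refine (h4.congr_coeff (by ring) (by ring) (by ring)).congr_fun' (Eventually.of_forall ?_)
  intro n
  simp only [← Real.exp_add]
  congr 1; ring

lemma rpow_taylor4 (p : ℝ) :
    (fun y : ℝ => (1 + y) ^ p - (1 + p * y + p * (p - 1) / 2 * y ^ 2 +
      p * (p - 1) * (p - 2) / 6 * y ^ 3)) =O[𝓝 0] fun y => y ^ 4 := by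
  have := (Real.one_add_rpow_hasFPowerSeriesAt_zero (a := p)).isBigO_sub_partialSum_pow 4
  refine (this.congr_left ?_).trans ?_
  · intro y
    simp [FormalMultilinearSeries.partialSum, Finset.sum_range_succ, binomialSeries,
      Ring.choose_eq_smul, Nat.factorial, descPochhammer_succ_right,
      Polynomial.smeval_sub, Polynomial.smeval_mul, Polynomial.smeval_X]
    have h2 : Polynomial.smeval (2 : Polynomial ℤ) p = 2 := by
      simpa using Polynomial.smeval_natCast (R := ℤ) p 2
    rw [h2]
    ring
  · refine (isBigO_refl (fun y : ℝ => y ^ 4) (𝓝 0)).congr_left ?_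
    intro y
    rw [Real.norm_eq_abs, Even.pow_abs (by decide)]

/-- the Gaussian tail integral -/
noncomputable def gTail (a : ℝ) : ℝ := ∫ u in Set.Ioi a, Real.exp (-u ^ 2 / 2)

lemma gauss_integrable : MeasureTheory.Integrable fun u : ℝ => Real.exp (-u ^ 2 / 2) := by
  have := integrable_exp_neg_mul_sq (b := 1 / 2) (by norm_num)
  refine this.congr (Eventually.of_forall fun u => ?_)
  simp only; congr 1; ring

lemma gauss_integral : ∫ u : ℝ, Real.exp (-u ^ 2 / 2) = Real.sqrt (2 * Real.pi) := by
  have := integral_gaussian (1 / 2)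
  rw [show Real.pi / (1 / 2) = 2 * Real.pi by ring] at this
  rw [← this]
  congr 1; ext u; congr 1; ring

lemma one_sub_cdf (a : ℝ) : 1 - stdNormalCDF a = gTail a / Real.sqrt (2 * Real.pi) := by
  have hpos : 0 < Real.sqrt (2 * Real.pi) := Real.sqrt_pos.mpr (by positivity)
  have h := MeasureTheory.integral_add_compl (measurableSet_Iic (a := a)) gauss_integrable
  rw [Set.compl_Iic, gauss_integral] at h
  unfold stdNormalCDF gTail
  rw [MeasureTheory.integral_div, eq_div_iff hpos.ne', sub_mul, div_mul_cancel₀ _ hpos.ne']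
  linarith

lemma gTail_nonneg (a : ℝ) : 0 ≤ gTail a :=
  MeasureTheory.setIntegral_nonneg measurableSet_Ioi fun _ _ => (Real.exp_pos _).le

lemma mills_bound {a : ℝ} (ha : 0 < a) :
    |gTail a * (a * Real.exp (a ^ 2 / 2)) - (1 - (a ^ 2)⁻¹ + 3 * ((a ^ 2)⁻¹) ^ 2)|
      ≤ 15 * ((a ^ 2)⁻¹) ^ 3 * (1 - (a ^ 2)⁻¹ + 3 * ((a ^ 2)⁻¹) ^ 2) := by
  set D : ℝ → ℝ := fun u => -(Real.exp (-u ^ 2 / 2) * (u⁻¹ - u⁻¹ ^ 3 + 3 * u⁻¹ ^ 5)) with hD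
  set D' : ℝ → ℝ := fun u => Real.exp (-u ^ 2 / 2) * (1 + 15 * u⁻¹ ^ 6) with hD'
  have hder : ∀ u ∈ Set.Ici a, HasDerivAt D (D' u) u := by
    intro u hu
    have hu0 : u ≠ 0 := (lt_of_lt_of_le ha hu).ne'
    have e1 : HasDerivAt (fun u : ℝ => Real.exp (-u ^ 2 / 2)) (Real.exp (-u ^ 2 / 2) * (-u)) u := by
      have : HasDerivAt (fun u : ℝ => -u ^ 2 / 2) (-u) u := by
        have := ((hasDerivAt_pow 2 u).neg).div_const 2
        refine this.congr_deriv ?_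
        push_cast; ring
      exact this.exp
    have e2 := hasDerivAt_inv hu0
    have e3 := (e1.mul ((e2.sub (e2.pow 3)).add ((e2.pow 5).const_mul 3))).neg
    refine e3.congr_deriv ?_
    simp [hD']
    field_simp
    ring
  have hlim : Tendsto D atTop (𝓝 0) := by
    have i1 : Tendsto (fun u : ℝ => u⁻¹) atTop (𝓝 0) := tendsto_inv_atTop_zero
    have i2 : Tendsto (fun u : ℝ => u⁻¹ - u⁻¹ ^ 3 + 3 * u⁻¹ ^ 5) atTop (𝓝 0) := by
      have := (i1.sub (i1.pow 3)).add ((i1.pow 5).const_mul 3)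
      simpa using this
    have i3 : Tendsto (fun u : ℝ => Real.exp (-u ^ 2 / 2)) atTop (𝓝 0) := by
      refine Real.tendsto_exp_atBot.comp ?_
      have : Tendsto (fun u : ℝ => u ^ 2 / 2) atTop atTop :=
        (tendsto_pow_atTop (by norm_num)).atTop_div_const (by norm_num)
      refine (tendsto_neg_atTop_atBot.comp this).congr ?_
      intro u; simp; ring
    have := (i3.mul i2).neg
    rw [mul_zero, neg_zero] at this
    exact this
  have hnn : ∀ u ∈ Set.Ioi a, 0 ≤ D' u := fun u _ => by
    simp only [hD']; positivity
  have hint := MeasureTheory.integrableOn_Ioi_deriv_of_nonneg' hder hnn hlim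
  have hval := MeasureTheory.integral_Ioi_of_hasDerivAt_of_nonneg' hder hnn hlim
  have hgi : MeasureTheory.IntegrableOn (fun u : ℝ => Real.exp (-u ^ 2 / 2)) (Set.Ioi a) :=
    gauss_integrable.integrableOn
  have hlow : gTail a ≤ 0 - D a := by
    rw [← hval]
    refine MeasureTheory.setIntegral_mono_on hgi hint measurableSet_Ioi ?_
    intro u _
    simp only [hD']
    have := Real.exp_pos (-u ^ 2 / 2)
    have h6 : 0 ≤ u⁻¹ ^ 6 := by positivity
    nlinarith [mul_nonneg this.le h6]
  have hup : 0 - D a ≤ gTail a * (1 + 15 * a⁻¹ ^ 6) := by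
    rw [← hval]
    unfold gTail
    rw [← MeasureTheory.integral_mul_const]
    refine MeasureTheory.setIntegral_mono_on hint (hgi.mul_const _) measurableSet_Ioi ?_
    intro u hu
    have hu' : a < u := hu
    simp only [hD']
    have : u⁻¹ ≤ a⁻¹ := inv_anti₀ ha hu'.le
    have h0 : 0 ≤ u⁻¹ := inv_nonneg.mpr (ha.trans hu').le
    gcongr
  have hexp : Real.exp (-a ^ 2 / 2) * Real.exp (a ^ 2 / 2) = 1 := by
    rw [← Real.exp_add, show -a ^ 2 / 2 + a ^ 2 / 2 = 0 by ring, Real.exp_zero]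
  have hDa : (0 - D a) * (a * Real.exp (a ^ 2 / 2)) = 1 - (a ^ 2)⁻¹ + 3 * ((a ^ 2)⁻¹) ^ 2 := by
    simp only [hD]
    have : (0 - -(Real.exp (-a ^ 2 / 2) * (a⁻¹ - a⁻¹ ^ 3 + 3 * a⁻¹ ^ 5))) * (a * Real.exp (a ^ 2 / 2))
      = (Real.exp (-a ^ 2 / 2) * Real.exp (a ^ 2 / 2)) * (a * (a⁻¹ - a⁻¹ ^ 3 + 3 * a⁻¹ ^ 5)) := by ring
    rw [this, hexp]
    field_simp
  have hpos : 0 < a * Real.exp (a ^ 2 / 2) := by positivity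
  rw [← hDa]
  have hs : 15 * ((a ^ 2)⁻¹) ^ 3 = 15 * a⁻¹ ^ 6 := by field_simp
  rw [hs]
  have h6 : 0 ≤ 15 * a⁻¹ ^ 6 := by positivity
  have k1 := mul_le_mul_of_nonneg_right hlow hpos.le
  have k2 := mul_le_mul_of_nonneg_right hup hpos.le
  have k3 := mul_le_mul_of_nonneg_left k1 h6
  rw [abs_le]
  have hT := mul_nonneg (gTail_nonneg a) hpos.le
  constructor
  · nlinarith
  · have := mul_nonneg h6 (hT.trans k1)
    linarith

lemma rpow_comp {h : ℕ → ℝ} (hh : Tendsto h atTop (𝓝 0)) (k p : ℝ) :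
    (fun n => (1 + k * h n) ^ p - (1 + p * (k * h n) + p * (p - 1) / 2 * (k * h n) ^ 2 +
      p * (p - 1) * (p - 2) / 6 * (k * h n) ^ 3)) =O[atTop] fun n => h n ^ 4 := by
  have h0 : Tendsto (fun n => k * h n) atTop (𝓝 0) := by simpa using hh.const_mul k
  have h1 := (rpow_taylor4 p).comp_tendsto h0
  refine IsBigO.trans h1 ?_
  refine ((isBigO_refl (fun n => h n ^ 4) atTop).const_mul_left (k ^ 4)).congr_left ?_
  intro n; simp only [Function.comp]; ring

lemma HasExp2.quot {h : ℕ → ℝ} (hh : Tendsto h atTop (𝓝 0)) (hp : ∀ᶠ n in atTop, 0 < h n)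
    (k p : ℝ) :
    HasExp2 h (fun n => ((1 + k * h n) ^ p - 1) / h n) (p * k) (p * (p - 1) / 2 * k ^ 2)
      (p * (p - 1) * (p - 2) / 6 * k ^ 3) := by
  have h1 := (rpow_comp hh k p).mul (isBigO_refl (fun n => (h n)⁻¹) atTop)
  refine h1.congr' ?_ ?_
  · filter_upwards [hp] with n hn
    field_simp
    ring
  · filter_upwards [hp] with n hn
    field_simp

lemma HasExp2.rpow {h : ℕ → ℝ} (hh : Tendsto h atTop (𝓝 0)) (hp : ∀ᶠ n in atTop, 0 < h n)
    (k p : ℝ) :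
    HasExp2 h (fun n => (1 + k * h n) ^ p) 1 (p * k) (p * (p - 1) / 2 * k ^ 2) := by
  have h1 := (HasExp2.const h 1).add ((HasExp2.quot hh hp k p).shift hh)
  refine (h1.congr_coeff (by ring) (by ring) (by ring)).congr_fun' ?_
  filter_upwards [hp] with n hn
  field_simp
  ring

lemma n_mul_tail_eq {B n t x G : ℝ} (hB : 0 < B) (hn : 0 < n)
    (hbn : 2 * Real.pi * B ^ 2 * Real.exp (B ^ 2) = n ^ 2)
    (hw : 0 < 1 + t * x * (B ^ 2)⁻¹)
    (hG : G = B * (1 + t * x * (B ^ 2)⁻¹) ^ (1 / t)) :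
    n * (1 - stdNormalCDF G) =
      (gTail G * (G * Real.exp (G ^ 2 / 2))) * (1 + t * x * (B ^ 2)⁻¹) ^ (-(1 / t)) *
      Real.exp ((-(1 / 2)) * (((1 + t * x * (B ^ 2)⁻¹) ^ (2 / t) - 1) / (B ^ 2)⁻¹)) := by
  have hn' : n = Real.sqrt (2 * Real.pi) * B * Real.exp (B ^ 2 / 2) := by
    rw [← Real.sqrt_sq hn.le, ← hbn]
    rw [show 2 * Real.pi * B ^ 2 * Real.exp (B ^ 2) =
      2 * Real.pi * (B * Real.exp (B ^ 2 / 2)) ^ 2 by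
        rw [mul_pow, ← Real.exp_nat_mul]
        rw [show ((2 : ℕ) : ℝ) * (B ^ 2 / 2) = B ^ 2 by push_cast; ring]; ring]
    rw [Real.sqrt_mul (by positivity), Real.sqrt_sq (by positivity)]; ring
  have hs : 0 < Real.sqrt (2 * Real.pi) := Real.sqrt_pos.mpr (by positivity)
  set w := 1 + t * x * (B ^ 2)⁻¹ with hwdef
  have hG2 : G ^ 2 = B ^ 2 * w ^ (2 / t) := by
    rw [hG, mul_pow, ← Real.rpow_natCast (w ^ (1 / t)) 2, ← Real.rpow_mul hw.le]
    congr 2; push_cast; ring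
  have hww : w ^ (1 / t) * w ^ (-(1 / t)) = 1 := by
    rw [← Real.rpow_add hw]; simp
  have hGB : G * w ^ (-(1 / t)) = B := by rw [hG, mul_assoc, hww, mul_one]
  have he : Real.exp (G ^ 2 / 2) * Real.exp ((-(1 / 2)) * ((w ^ (2 / t) - 1) / (B ^ 2)⁻¹)) =
      Real.exp (B ^ 2 / 2) := by
    rw [← Real.exp_add, hG2]; congr 1; rw [div_inv_eq_mul]; ring
  rw [one_sub_cdf, hn']
  calc _ = gTail G * B * Real.exp (B ^ 2 / 2) := by field_simp
    _ = gTail G * (G * w ^ (-(1 / t))) * (Real.exp (G ^ 2 / 2) *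
        Real.exp ((-(1 / 2)) * ((w ^ (2 / t) - 1) / (B ^ 2)⁻¹))) := by rw [hGB, he]
    _ = _ := by ring

lemma tail_expansion {h : ℕ → ℝ} (hh : Tendsto h atTop (𝓝 0)) (hp : ∀ᶠ n in atTop, 0 < h n)
    (t x : ℝ) (ht : 0 < t) (G : ℕ → ℝ) (hG0 : ∀ᶠ n in atTop, 0 < G n)
    (hG : ∀ᶠ n in atTop, ((G n) ^ 2)⁻¹ = h n * (1 + t * x * h n) ^ (-(2 / t))) :
    HasExp2 h (fun n => (gTail (G n) * (G n * Real.exp (G n ^ 2 / 2))) *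
      (1 + t * x * h n) ^ (-(1 / t)) *
      Real.exp ((-(1 / 2)) * (((1 + t * x * h n) ^ (2 / t) - 1) / h n)))
      (Real.exp (-x)) (-(Real.exp (-x) * (1 + x + (2 - t) / 2 * x ^ 2)))
      (Real.exp (-x) * (3 + 3 * x + 3 / 2 * x ^ 2 + (2 - t) * (2 * t + 1) / 6 * x ^ 3 +
            (t - 2) ^ 2 / 8 * x ^ 4)) := by
  have hinv : HasExp2 h (fun n => ((G n) ^ 2)⁻¹) 0 1 (-(2 / t) * (t * x)) := by
    refine ((HasExp2.rpow hh hp (t * x) (-(2 / t))).shift hh).congr_fun' ?_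
    filter_upwards [hG] with n hn
    exact hn.symm
  have hP := ((HasExp2.const h 1).add (hinv.const_mul (-1))).add ((hinv.mul hh hinv).const_mul 3)
  have hinvO : (fun n => ((G n) ^ 2)⁻¹) =O[atTop] h := by
    have h1 := (isBigO_refl h atTop).mul
      (((HasExp2.rpow hh hp (t * x) (-(2 / t))).tendsto hh).isBigO_one ℝ)
    refine h1.congr' ?_ (Eventually.of_forall fun n => mul_one _)
    filter_upwards [hG] with n hn
    exact hn.symm
  have hM : HasExp2 h (fun n => gTail (G n) * (G n * Real.exp (G n ^ 2 / 2))) 1 (-1)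
      (2 * x + 3) := by
    refine HasExp2.congr_coeff (hP.add_err ?_) (by ring) (by ring) (by field_simp; ring)
    have e1 : (fun n => 15 * (((G n) ^ 2)⁻¹) ^ 3 *
        (1 - ((G n) ^ 2)⁻¹ + 3 * (((G n) ^ 2)⁻¹) ^ 2)) =O[atTop] fun n => h n ^ 3 := by
      have := ((hinvO.pow 3).const_mul_left 15).mul ((hP.tendsto hh).isBigO_one ℝ)
      refine (this.congr_left ?_).congr_right ?_
      · intro n; ring
      · intro n; ring
    refine IsBigO.trans ?_ e1
    refine IsBigO.of_bound 1 ?_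
    filter_upwards [hG0] with n hn
    have := mills_bound hn
    rw [Real.norm_eq_abs, Real.norm_eq_abs, one_mul]
    refine le_trans (le_trans (le_of_eq ?_) this) (le_abs_self _)
    congr 1; ring
  have hE := ((HasExp2.quot hh hp (t * x) (2 / t)).const_mul (-(1 / 2))).exp hh
  have e0 : -(1 / 2) * (2 / t * (t * x)) = -x := by field_simp
  rw [e0] at hE
  refine ((hM.mul hh (HasExp2.rpow hh hp (t * x) (-(1 / t)))).mul hh hE).congr_coeff ?_ ?_ ?_
  · ring
  · field_simp; ring
  · field_simp; ring

lemma log_pow_err {u : ℝ} (h0 : 0 ≤ u) (h1 : u ≤ 1 / 2) : |Real.log (1 - u) + u| ≤ 2 * u ^ 2 := by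
  have h := Real.abs_log_sub_add_sum_range_le (x := u) (by rw [abs_of_nonneg h0]; linarith) 1
  simp only [Finset.sum_range_one, abs_of_nonneg h0] at h
  norm_num at h
  rw [add_comm]
  refine h.trans ?_
  rw [div_le_iff₀ (by linarith)]
  nlinarith [sq_nonneg u]

lemma F_expansion {h : ℕ → ℝ} (hh : Tendsto h atTop (𝓝 0)) (u : ℕ → ℝ) (hu : ∀ n, 0 ≤ u n)
    (hn : (fun n : ℕ => ((n : ℝ))⁻¹) =O[atTop] fun n => h n ^ 3) {a0 a1 a2 : ℝ}
    (H : HasExp2 h (fun n => (n : ℝ) * u n) a0 a1 a2) :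
    HasExp2 h (fun n => (1 - u n) ^ n - (u n) ^ n) (Real.exp (-a0)) (Real.exp (-a0) * (-a1))
      (Real.exp (-a0) * (-a2 + a1 ^ 2 / 2)) := by
  have hnu := (H.tendsto hh).isBigO_one ℝ
  have huO : u =O[atTop] fun n : ℕ => ((n : ℝ))⁻¹ := by
    refine (hnu.mul (isBigO_refl (fun n : ℕ => ((n : ℝ))⁻¹) atTop)).congr' ?_ ?_
    · filter_upwards [eventually_gt_atTop 0] with n hn
      have : (n : ℝ) ≠ 0 := by positivity
      field_simp
    · exact Eventually.of_forall fun n => one_mul _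
  have hu0 : Tendsto u atTop (𝓝 0) := huO.trans_tendsto tendsto_inv_atTop_nhds_zero_nat
  have hhalf : ∀ᶠ n in atTop, u n ≤ 1 / 2 :=
    (hu0.eventually (gt_mem_nhds (by norm_num : (0 : ℝ) < 1 / 2))).mono fun n hn => hn.le
  have hlog : HasExp2 h (fun n => (n : ℝ) * Real.log (1 - u n)) (-a0) (-a1) (-a2) := by
    refine ((H.const_mul (-1)).congr_coeff (by ring) (by ring) (by ring)).add_err ?_
    have e1 : (fun n : ℕ => 2 * ((n : ℝ) * u n * u n)) =O[atTop] fun n => h n ^ 3 := by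
      refine ((hnu.mul (huO.trans hn)).const_mul_left 2).congr_right ?_
      intro n; ring
    refine IsBigO.trans (IsBigO.of_bound 1 ?_) e1
    filter_upwards [hhalf] with n h2
    have := log_pow_err (hu n) h2
    rw [Real.norm_eq_abs, Real.norm_eq_abs, one_mul]
    refine le_trans ?_ (le_abs_self _)
    rw [show (n : ℝ) * Real.log (1 - u n) - -1 * ((n : ℝ) * u n) =
      (n : ℝ) * (Real.log (1 - u n) + u n) by ring, abs_mul, abs_of_nonneg (Nat.cast_nonneg n)]
    have := mul_le_mul_of_nonneg_left this (Nat.cast_nonneg (α := ℝ) n)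
    linarith
  refine ((hlog.exp hh).congr_coeff rfl rfl (by ring)).add_err ?_
  refine IsBigO.trans (IsBigO.of_bound 1 ?_) (huO.trans hn)
  filter_upwards [hhalf, eventually_gt_atTop 0] with n h2 hn0
  have hpos : 0 < 1 - u n := by linarith
  have : Real.exp ((n : ℝ) * Real.log (1 - u n)) = (1 - u n) ^ n := by
    rw [Real.exp_nat_mul, Real.exp_log hpos]
  rw [this, one_mul, Real.norm_eq_abs, Real.norm_eq_abs, sub_sub_cancel_left, abs_neg,
    abs_of_nonneg (pow_nonneg (hu n) n), abs_of_nonneg (hu n)]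
  exact pow_le_of_le_one (hu n) (by linarith) hn0.ne'

lemma b_tendsto (b : ℕ → ℝ)
    (hb : ∀ n : ℕ, 1 ≤ n → 0 < b n ∧
      2 * Real.pi * (b n) ^ 2 * Real.exp ((b n) ^ 2) = (n : ℝ) ^ 2) : Tendsto b atTop atTop := by
  rw [tendsto_atTop]
  intro M
  set K := 2 * Real.pi * M ^ 2 * Real.exp (M ^ 2) with hK
  have : ∀ᶠ n : ℕ in atTop, K < (n : ℝ) ^ 2 :=
    ((tendsto_pow_atTop (by norm_num : (2 : ℕ) ≠ 0)).comp
      (tendsto_natCast_atTop_atTop (R := ℝ))).eventually_gt_atTop K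
  filter_upwards [this, eventually_ge_atTop 1] with n h1 h2
  by_contra hlt
  push Not at hlt
  obtain ⟨h3, h4⟩ := hb n h2
  rw [← h4, hK] at h1
  refine absurd h1 (not_lt.mpr ?_)
  have := pow_le_pow_left₀ h3.le hlt.le 2
  gcongr

lemma inv_n_bigO (b : ℕ → ℝ)
    (hb : ∀ n : ℕ, 1 ≤ n → 0 < b n ∧
      2 * Real.pi * (b n) ^ 2 * Real.exp ((b n) ^ 2) = (n : ℝ) ^ 2) :
    (fun n : ℕ => ((n : ℝ))⁻¹) =O[atTop] fun n => (((b n) ^ 2)⁻¹) ^ 3 := by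
  refine IsBigO.of_bound 120 ?_
  filter_upwards [eventually_ge_atTop 1, (b_tendsto b hb).eventually_ge_atTop 1] with n h1 h2
  obtain ⟨h3, h4⟩ := hb n h1
  have hn : 0 < (n : ℝ) := by positivity
  rw [Real.norm_eq_abs, Real.norm_eq_abs, abs_of_pos (by positivity), abs_of_pos (by positivity)]
  have e1 : ((b n) ^ 2) ^ 5 / (Nat.factorial 5 : ℝ) ≤ Real.exp ((b n) ^ 2) :=
    Real.pow_div_factorial_le_exp _ (by positivity) 5
  have e2 : ((b n) ^ 6 / 120) ^ 2 ≤ (n : ℝ) ^ 2 := by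
    rw [← h4]
    have hpi := Real.pi_gt_three
    have e3 : ((b n) ^ 2) ^ 5 / 120 ≤ Real.exp ((b n) ^ 2) := by
      norm_num [Nat.factorial] at e1 ⊢; exact e1
    have e4 : (b n) ^ 2 * (((b n) ^ 2) ^ 5 / 120) ≤ (b n) ^ 2 * Real.exp ((b n) ^ 2) := by gcongr
    have e5 : 0 ≤ (b n) ^ 2 * Real.exp ((b n) ^ 2) := by positivity
    have e6 : 0 ≤ (b n) ^ 12 := by positivity
    nlinarith
  have e7 : (b n) ^ 6 / 120 ≤ n := by
    exact (pow_le_pow_iff_left₀ (by positivity) hn.le (by norm_num)).mp e2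
  rw [show 120 * (((b n) ^ 2)⁻¹) ^ 3 = ((b n) ^ 6 / 120)⁻¹ by field_simp]
  exact inv_anti₀ (by positivity) e7

/-- Theorem 2.1, `t ≠ 2`: With `b_n` the unique positive solution of
`2π b_n² exp(b_n²) = n²`, `c_n = t b_n^{t−2}`, `d_n = b_n^t` (for `t > 0`, `t ≠ 2`),
`g_n = (c_n x + d_n)^{1/t}` and `F_n(x) = Φ(g_n)^n − (1 − Φ(g_n))^n`
(which equals `P(|M_n|^t ≤ c_n x + d_n)`):
`F_n(x) = Λ(x) + b_n^{−2} Λ(x) e^{−x}(k₁ + b_n^{−2} k₂ + O(b_n^{−4}))`, with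
`k₁ = 1 + x + ((2−t)/2)x²` and
`k₂ = −(3 + 3x + (3/2)x² + ((2−t)(2t+1)/6)x³ + ((t−2)²/8)x⁴
  − (e^{−x}/2)(1 + x + ((2−t)/2)x²)²)`. -/
theorem powered_extremes_df_higher_order_expansion_t_ne_two
    (b : ℕ → ℝ)
    (hb : ∀ n : ℕ, 1 ≤ n → 0 < b n ∧
      2 * Real.pi * (b n) ^ 2 * Real.exp ((b n) ^ 2) = (n : ℝ) ^ 2)
    (t : ℝ) (ht : 0 < t) (ht2 : t ≠ 2) (x : ℝ)
    (c d g F : ℕ → ℝ)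
    (hc : ∀ n : ℕ, c n = t * b n ^ (t - 2))
    (hd : ∀ n : ℕ, d n = b n ^ t)
    (hg : ∀ n : ℕ, g n = (c n * x + d n) ^ (1 / t))
    (hF : ∀ n : ℕ, F n = stdNormalCDF (g n) ^ n - (1 - stdNormalCDF (g n)) ^ n) :
    ∃ C > (0 : ℝ), ∃ N : ℕ, ∀ n : ℕ, N ≤ n →
      0 < c n * x + d n ∧
      |F n - gumbel x -
        gumbel x * Real.exp (-x) / (b n) ^ 2 * (1 + x + (2 - t) / 2 * x ^ 2) -
        gumbel x * Real.exp (-x) / (b n) ^ 4 *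
          (-(3 + 3 * x + 3 / 2 * x ^ 2 + (2 - t) * (2 * t + 1) / 6 * x ^ 3 +
            (t - 2) ^ 2 / 8 * x ^ 4 -
            Real.exp (-x) / 2 * (1 + x + (2 - t) / 2 * x ^ 2) ^ 2))|
      ≤ C / (b n) ^ 6 := by
  set h : ℕ → ℝ := fun n => ((b n) ^ 2)⁻¹ with hhdef
  have hbt := b_tendsto b hb
  have hh : Tendsto h atTop (𝓝 0) :=
    tendsto_inv_atTop_zero.comp ((tendsto_pow_atTop (by norm_num : (2 : ℕ) ≠ 0)).comp hbt)
  have hp : ∀ᶠ n in atTop, 0 < h n := by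
    filter_upwards [eventually_ge_atTop 1] with n hn
    have := (hb n hn).1
    simp only [hhdef]; positivity
  have hwpos : ∀ᶠ n in atTop, 0 < 1 + t * x * h n := by
    have : Tendsto (fun n => 1 + t * x * h n) atTop (𝓝 (1 + t * x * 0)) :=
      tendsto_const_nhds.add (hh.const_mul _)
    exact this.eventually (lt_mem_nhds (by norm_num))
  have hcd : ∀ n, 1 ≤ n → c n * x + d n = (b n) ^ t * (1 + t * x * h n) := by
    intro n hn
    have hbp := (hb n hn).1
    rw [hc, hd, Real.rpow_sub hbp, Real.rpow_two]
    simp only [hhdef]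
    field_simp
    ring
  have hgb : ∀ᶠ n in atTop, g n = b n * (1 + t * x * h n) ^ (1 / t) := by
    filter_upwards [eventually_ge_atTop 1, hwpos] with n hn hw
    have hbp := (hb n hn).1
    rw [hg, hcd n hn, Real.mul_rpow (by positivity) hw.le, ← Real.rpow_mul hbp.le,
      mul_one_div_cancel ht.ne', Real.rpow_one]
  have hgpos : ∀ᶠ n in atTop, 0 < g n := by
    filter_upwards [eventually_ge_atTop 1, hwpos, hgb] with n hn hw e
    have hbp := (hb n hn).1
    rw [e]; positivity
  have hginv : ∀ᶠ n in atTop, ((g n) ^ 2)⁻¹ = h n * (1 + t * x * h n) ^ (-(2 / t)) := by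
    filter_upwards [eventually_ge_atTop 1, hwpos, hgb] with n hn hw e
    rw [e, mul_pow, ← Real.rpow_natCast (_ ^ (1 / t)) 2, ← Real.rpow_mul hw.le, mul_inv,
      Real.rpow_neg hw.le]
    congr 3; push_cast; ring
  have hT := tail_expansion hh hp t x ht g hgpos hginv
  have hT2 := hT.congr_fun' (f' := fun n => (n : ℝ) * (1 - stdNormalCDF (g n))) (by
    filter_upwards [eventually_ge_atTop 1, hwpos, hgb] with n hn hw e
    obtain ⟨h1, h2⟩ := hb n hn
    exact (n_mul_tail_eq h1 (by positivity) h2 hw e).symm)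
  have hu : ∀ n, 0 ≤ 1 - stdNormalCDF (g n) := fun n => by
    rw [one_sub_cdf]; exact div_nonneg (gTail_nonneg _) (Real.sqrt_nonneg _)
  have hfin := F_expansion hh (fun n => 1 - stdNormalCDF (g n)) hu (inv_n_bigO b hb) hT2
  obtain ⟨C, hC, hCb⟩ := hfin.exists_pos
  rw [IsBigOWith] at hCb
  obtain ⟨N, hN⟩ := eventually_atTop.mp (hCb.and (hwpos.and (eventually_ge_atTop 1)))
  refine ⟨C, hC, N, fun n hn => ?_⟩
  obtain ⟨h1, h2, h3⟩ := hN n hn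
  have hbp := (hb n h3).1
  refine ⟨?_, ?_⟩
  · rw [hcd n h3]; positivity
  · rw [Real.norm_eq_abs, Real.norm_eq_abs] at h1
    have hr : C * |h n ^ 3| = C / (b n) ^ 6 := by
      rw [abs_of_pos (by simp only [hhdef]; positivity)]
      simp only [hhdef]; field_simp
    rw [hr] at h1
    refine le_trans (le_of_eq ?_) h1
    congr 1
    rw [hF]
    simp only [hhdef, sub_sub_cancel, gumbel]
    field_simp
    ring
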